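/- The sets R''_0, R''_1, R''_2, R''_3 partition H and form a three-class translation association scheme on the additive group of H: there exist natural numbers p^m_{k,l} for 0 ≤ k, l, m ≤ 3 such that for all k, l, m and every d ∈ R''_m, the number of z ∈ H with z ∈ R''_k and d + z ∈ R''_l equals p^m_{k,l} (note that in characteristic 2 one has d − z = d + z, so the relations are symmetric). -/

import Mathlib

noncomputable section

open scoped BigOperators

/-- `M = 2^{2s} + 2^s + 1`. -/
abbrev Mof (s : ℕ) : ℕ := 2 ^ (2 * s) + 2 ^ s + 1

/-- The relative trace from `F` (of order `2^{3s}`) to its subfield `E` of order `2^s`: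
`Tr_{F/E}(x) = x + x^{2^s} + x^{2^{2s}}`, viewed as a map `F → F`. -/
def trFE {F : Type*} [Field F] (s : ℕ) (x : F) : F :=
  x + x ^ (2 ^ s) + x ^ (2 ^ (2 * s))

/-- `ψ(x) = 1` if the absolute trace `Tr_{F/𝔽₂}(x) = 0`, and `-1` otherwise. -/
def psi (F : Type*) [Field F] [Algebra (ZMod 2) F] (x : F) : ℤ :=
  if Algebra.trace (ZMod 2) F x = 0 then 1 else -1

/-- `ψ(cS) = ∑_{x ∈ S} ψ(c·x)`. -/
def psiSum (F : Type*) [Field F] [Algebra (ZMod 2) F] (c : F) (S : Set F) : ℤ :=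
  ∑ᶠ x ∈ S, psi F (c * x)

/-- `D = {u ∈ F^× : Tr_{F/E}(u⁻¹) = 0}`. -/
def Dset (F : Type*) [Field F] (s : ℕ) : Set F :=
  {u | u ≠ 0 ∧ trFE s u⁻¹ = 0}

/-- `S_a = {u ∈ F^× : Tr_{F/E}(u^{2^s+1}) = 0 ∧ Tr_{F/E}(ω^a u) = 0}`. -/
def Sa {F : Type*} [Field F] (s : ℕ) (ω : F) (a : ℤ) : Set F :=
  {u | u ≠ 0 ∧ trFE s (u ^ (2 ^ s + 1)) = 0 ∧ trFE s (ω ^ a * u) = 0}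

/-- `T₁ ⊆ ℤ/Mℤ`: classes `a` with `|S_a| = 2^s - 1`. -/
def T1 {F : Type*} [Field F] (s : ℕ) (ω : F) : Set (ZMod (Mof s)) :=
  {x | (Sa s ω (x.val : ℤ)).ncard = 2 ^ s - 1}

/-- `T₂ ⊆ ℤ/Mℤ`: classes `a` with `|S_a| = 2(2^s - 1)`. -/
def T2 {F : Type*} [Field F] (s : ℕ) (ω : F) : Set (ZMod (Mof s)) :=
  {x | (Sa s ω (x.val : ℤ)).ncard = 2 * (2 ^ s - 1)}

/-- `T₃ ⊆ ℤ/Mℤ`: classes `a` with `|S_a| = 0`. -/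
def T3 {F : Type*} [Field F] (s : ℕ) (ω : F) : Set (ZMod (Mof s)) :=
  {x | (Sa s ω (x.val : ℤ)).ncard = 0}

/-- The cyclotomic class `C_i^{(M,K)} = {g^{i+Mt} : t ∈ ℤ}`. -/
def cyc {K : Type*} [Field K] (M : ℕ) (g : K) (i : ℤ) : Set K :=
  {x | ∃ t : ℤ, x = g ^ (i + (M : ℤ) * t)}

/-- `⋃_{i ∈ T} C_i^{(M,K)}` for a set `T ⊆ ℤ/Mℤ` of indices. -/
def Rclass {K : Type*} [Field K] (s : ℕ) (g : K) (T : Set (ZMod (Mof s))) : Set K :=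
  ⋃ i ∈ T, cyc (Mof s) g ((i.val : ℤ))

/-- The family `R_0 = {0}`, `R_k = ⋃_{i ∈ T_k} C_i^{(M,K)}`, `k = 1, 2, 3`. -/
def Rfam {F K : Type*} [Field F] [Field K] (s : ℕ) (ω : F) (g : K) : Fin 4 → Set K :=
  ![{0}, Rclass s g (T1 s ω), Rclass s g (T2 s ω), Rclass s g (T3 s ω)]

/-- Indicator `[P] = 1` if `P` holds, `0` otherwise. -/
def Ind (P : Prop) : ℤ := @ite ℤ P (Classical.propDecidable P) 1 0

/-!
The proof takes place in the group algebra `K[Fˣ]`, where `q = |E|` and `K` is a field of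
characteristic zero with a nontrivial additive character `ψ` on `E`. It contains the universal Gauss
sum `γ = ∑ ψ(Tr x) [x]`, the sum `σ` of all units, and the sum `δ` of the units of trace zero over
`E`. The coefficient of `δ²` at `b` is the number of factorisations `b = v w` with
`Tr v = Tr w = 0`. Since `F` is cubic over `E` these factorisations form at most two `Eˣ`-orbits,
so in characteristic two there are `q - 1` of them if `Tr b = 0`, and `2 (q - 1)` or `0` otherwise.
Up to inversion `S_a` consists of the factors `v` for `b = ω ^ a`, so the relations are the fibres
of the number of factorisations of `N_{H/F}(x)`, where `x = 0` is told apart by having `q² - 1`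
elements `v`. Thus the functions on `Fˣ` which only depend on this number form the span of `σ`, `δ`
and `δ²`.

By the Hasse–Davenport relation, the Fourier transform on `H` of `f ∘ N_{H/F}` is given by
`γ³ · f̌`, where `f̌` is the image of `f` under inversion. Multiplying the sum `ε` of the units of
`E` by `γ` gives `q δ - σ`, and `γ · γ̌` equals `|F| [-1] - σ`; it follows that `γ δ̌ = q² ε - σ`,
and that `x ↦ γ³ · x̌` maps `δ` to a combination of `δ²` and `σ` and `δ²` to a combination of `δ`
and `σ`. So the functions that are constant on the relations are stable under the Fourier transform,
hence under convolution, and the convolutions of the indicator functions of two relations are the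
intersection numbers.
-/

section MonicPolynomials

open Polynomial UniqueFactorizationMonoid

/-- The monic polynomials of degree `n` over a finite field, enumerated by their lower
coefficients. -/
def monicOfDegree (F : Type*) [Field F] [Fintype F] (n : ℕ) : Finset F[X] :=
  Finset.univ.map
    (((monicEquivDegreeLT n).trans (degreeLTEquiv F n).toEquiv).symm.toEmbedding.trans
      (Function.Embedding.subtype _))

/-- The von Mangoldt function of the polynomial ring: the degree of `P` at the powers of an
irreducible polynomial `P`, and `0` elsewhere. -/
def polyVonMangoldt {F : Type*} [Field F] (f : F[X]) : ℕ :=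
  open Classical in if IsPrimePow f then (radical f).natDegree else 0

variable {F : Type*} [Field F]

theorem polyVonMangoldt_pow {P : F[X]} (hP : Irreducible P) {k : ℕ} (hk : k ≠ 0) :
    polyVonMangoldt (P ^ k) = P.natDegree := by
  classical
  rw [polyVonMangoldt, if_pos (hP.prime.isPrimePow.pow hk), radical_pow _ hk,
    radical_of_prime hP.prime, natDegree_eq_of_degree_eq degree_normalize]

theorem polyVonMangoldt_of_not_isPrimePow {f : F[X]} (hf : ¬IsPrimePow f) :
    polyVonMangoldt f = 0 :=
  if_neg hf

theorem exists_monic_irreducible_pow_eq {f : F[X]} (hf : f.Monic) (h : IsPrimePow f) :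
    ∃ P : F[X], ∃ k, P.Monic ∧ Irreducible P ∧ k ≠ 0 ∧ P ^ k = f := by
  classical
  obtain ⟨P, k, hP, hk, rfl⟩ := h
  exact ⟨normalize P, k, monic_normalize hP.ne_zero,
    (normalize_associated P).symm.irreducible hP.irreducible, hk.ne',
    (map_pow normalizeHom P k).symm.trans hf.normalize_eq_self⟩

theorem eq_and_eq_of_irreducible_pow_eq {P Q : F[X]} (hPm : P.Monic) (hQm : Q.Monic)
    (hP : Irreducible P) (hQ : Irreducible Q) {k l : ℕ} (hk : k ≠ 0) (h : P ^ k = Q ^ l) :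
    P = Q ∧ k = l := by
  obtain rfl : P = Q := eq_of_monic_of_associated hPm hQm <|
    hP.associated_of_dvd hQ (hP.prime.dvd_of_dvd_pow (h ▸ dvd_pow_self P hk))
  exact ⟨rfl, pow_injective_of_not_isUnit hP.not_isUnit hP.ne_zero h⟩

theorem irreducible_pow_dvd_iff_le_count [DecidableEq F] {P f : F[X]} (hP : Irreducible P)
    (hPm : P.Monic) (hf : f ≠ 0) {k : ℕ} :
    P ^ k ∣ f ↔ k ≤ (normalizedFactors f).count P := by
  rw [dvd_iff_normalizedFactors_le_normalizedFactors (pow_ne_zero k hP.ne_zero) hf,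
    normalizedFactors_of_irreducible_pow hP, hPm.normalize_eq_self,
    Multiset.le_count_iff_replicate_le]

theorem irreducible_of_mem_primeFactors [DecidableEq F] {P f : F[X]} (h : P ∈ primeFactors f) :
    Irreducible P :=
  irreducible_of_normalized_factor P (mem_primeFactors.1 h)

theorem monic_of_mem_primeFactors [DecidableEq F] {P f : F[X]} (h : P ∈ primeFactors f) :
    P.Monic := by
  rw [← normalize_normalized_factor P (mem_primeFactors.1 h)]
  exact monic_normalize (irreducible_of_mem_primeFactors h).ne_zero

theorem sum_count_normalizedFactors_mul_natDegree [DecidableEq F] {f : F[X]} (hf : f ≠ 0) :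
    ∑ P ∈ primeFactors f, (normalizedFactors f).count P * P.natDegree = f.natDegree := by
  classical
  rw [natDegree_eq_of_degree_eq (degree_eq_degree_of_associated (prod_normalizedFactors hf).symm),
    natDegree_multiset_prod _ (zero_notMem_normalizedFactors f), Finset.sum_multiset_map_count]
  simp only [smul_eq_mul, primeFactors]
  congr!

variable [Fintype F]

theorem mem_monicOfDegree {n : ℕ} {f : F[X]} :
    f ∈ monicOfDegree F n ↔ f.Monic ∧ f.natDegree = n := by
  set e := (monicEquivDegreeLT n).trans (degreeLTEquiv F n).toEquiv
  refine Finset.mem_map.trans ⟨?_, fun h =>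
    ⟨e ⟨f, h⟩, Finset.mem_univ _, congrArg Subtype.val (e.symm_apply_apply ⟨f, h⟩)⟩⟩
  rintro ⟨v, -, rfl⟩
  exact (e.symm v).2

theorem monicOfDegree_zero : monicOfDegree F 0 = {1} := by
  ext f
  simp only [mem_monicOfDegree, Finset.mem_singleton]
  exact ⟨fun h => h.1.natDegree_eq_zero.1 h.2, by rintro rfl; simp⟩

theorem sum_monicOfDegree {A : Type*} [AddCommMonoid A] (w : F[X] → A) (n : ℕ) :
    ∑ f ∈ monicOfDegree F n, w f =
      ∑ v : Fin n → F, w (X ^ n + ∑ i : Fin n, monomial i (v i)) :=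
  Finset.sum_map _ _ _

open Classical in
theorem sum_isPrimePow_dvd {A : Type*} [AddCommMonoid A] {w : F[X] → A}
    (hw : ∀ g, ¬IsPrimePow g → w g = 0) {f : F[X]} (hf : f ≠ 0) :
    ∑ j ∈ Finset.range (f.natDegree + 1), ∑ g ∈ monicOfDegree F j with g ∣ f, w g =
      ∑ P ∈ primeFactors f, ∑ k ∈ Finset.Icc 1 ((normalizedFactors f).count P), w (P ^ k) := by
  rw [Finset.sum_sigma', Finset.sum_sigma']
  symm
  refine Finset.sum_of_injOn (fun p => ⟨(p.1 ^ p.2).natDegree, p.1 ^ p.2⟩) ?_ ?_ ?_ fun _ _ => rfl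
  · rintro ⟨P, k⟩ hp ⟨Q, l⟩ hq h
    simp only [Finset.coe_sigma, Set.mem_sigma_iff, Finset.mem_coe, Finset.mem_Icc] at hp hq
    obtain ⟨rfl, rfl⟩ := eq_and_eq_of_irreducible_pow_eq (monic_of_mem_primeFactors hp.1)
      (monic_of_mem_primeFactors hq.1) (irreducible_of_mem_primeFactors hp.1)
      (irreducible_of_mem_primeFactors hq.1) (by lia) (congrArg Sigma.snd h)
    rfl
  · rintro ⟨P, k⟩ hp
    simp only [Finset.coe_sigma, Set.mem_sigma_iff, Finset.mem_coe, Finset.mem_Icc] at hp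
    have hPm : P.Monic := monic_of_mem_primeFactors hp.1
    have hdvd : P ^ k ∣ f := (irreducible_pow_dvd_iff_le_count
      (irreducible_of_mem_primeFactors hp.1) hPm hf).2 hp.2.2
    simp only [Finset.coe_sigma, Set.mem_sigma_iff, Finset.mem_coe, Finset.mem_range_succ_iff,
      Finset.mem_filter]
    exact ⟨natDegree_le_of_dvd hdvd hf, mem_monicOfDegree.2 ⟨hPm.pow k, rfl⟩, hdvd⟩
  · rintro ⟨j, g⟩ hg hng
    simp only [Finset.mem_sigma, Finset.mem_filter, mem_monicOfDegree] at hg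
    refine hw g fun hpp => hng ?_
    obtain ⟨P, k, hPm, hP, hk, rfl⟩ := exists_monic_irreducible_pow_eq hg.2.1.1 hpp
    have hle := (irreducible_pow_dvd_iff_le_count hP hPm hf).1 hg.2.2
    refine ⟨⟨P, k⟩, ?_, by simp only [hg.2.1.2]⟩
    simp only [Finset.coe_sigma, Set.mem_sigma_iff, Finset.mem_coe, Finset.mem_Icc]
    exact ⟨mem_primeFactors.2 (Multiset.count_pos.1 (by lia)), by lia, hle⟩

open Classical in
theorem sum_polyVonMangoldt {f : F[X]} (hf : f ≠ 0) :
    ∑ j ∈ Finset.range (f.natDegree + 1), ∑ g ∈ monicOfDegree F j with g ∣ f,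
      polyVonMangoldt g = f.natDegree := by
  rw [sum_isPrimePow_dvd (fun _ => polyVonMangoldt_of_not_isPrimePow) hf,
    ← sum_count_normalizedFactors_mul_natDegree hf]
  refine Finset.sum_congr rfl fun P hP => ?_
  have hconst : ∀ k ∈ Finset.Icc 1 ((normalizedFactors f).count P),
      polyVonMangoldt (P ^ k) = P.natDegree := fun k hk =>
    polyVonMangoldt_pow (irreducible_of_mem_primeFactors hP)
      (Nat.one_le_iff_ne_zero.1 (Finset.mem_Icc.1 hk).1)
  rw [Finset.sum_congr rfl hconst, Finset.sum_const, Nat.card_Icc, Nat.add_sub_cancel, smul_eq_mul]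

open Classical in
theorem sum_monicOfDegree_filter_dvd {A : Type*} [AddCommMonoid A] (w : F[X] → A)
    {g : F[X]} {n : ℕ} (hg : g.Monic) (hn : g.natDegree ≤ n) :
    ∑ f ∈ monicOfDegree F n with g ∣ f, w f =
      ∑ h ∈ monicOfDegree F (n - g.natDegree), w (g * h) := by
  symm
  refine Finset.sum_nbij (g * ·) (fun h hh => ?_) (mul_right_injective₀ hg.ne_zero).injOn
    (fun f hf => ?_) fun _ _ => rfl
  · rw [mem_monicOfDegree] at hh
    rw [Finset.mem_filter, mem_monicOfDegree, hg.natDegree_mul hh.1, hh.2]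
    exact ⟨⟨hg.mul hh.1, Nat.add_sub_cancel' hn⟩, dvd_mul_right g h⟩
  · obtain ⟨hf, h, rfl⟩ := Finset.mem_filter.1 hf
    rw [mem_monicOfDegree] at hf
    have hh : h.Monic := hg.of_mul_monic_left hf.1
    exact ⟨h, mem_monicOfDegree.2 ⟨hh, by rw [← hf.2, hg.natDegree_mul hh]; lia⟩, rfl⟩

variable {A : Type*} [CommRing A] {w : F[X] → A}

/-- The coefficient form of `T L' = (L' / L) L` for the generating function `L = ∑ w(f) T ^ deg f`
over the monic polynomials. -/
theorem natCast_mul_sum_monicOfDegree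
    (hw : ∀ ⦃f g⦄, f.Monic → g.Monic → w (f * g) = w f * w g) (n : ℕ) :
    n * ∑ f ∈ monicOfDegree F n, w f = ∑ j ∈ Finset.range (n + 1),
      (∑ g ∈ monicOfDegree F j, polyVonMangoldt g * w g) * ∑ h ∈ monicOfDegree F (n - j), w h := by
  classical
  calc
    _ = ∑ f ∈ monicOfDegree F n, ∑ j ∈ Finset.range (n + 1), ∑ g ∈ monicOfDegree F j with g ∣ f,
          (polyVonMangoldt g : A) * w f := by
      rw [Finset.mul_sum]
      refine Finset.sum_congr rfl fun f hf => ?_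
      obtain ⟨hfm, rfl⟩ := mem_monicOfDegree.1 hf
      simp only [← Finset.sum_mul]
      exact_mod_cast congrArg (fun m : ℕ => (m : A) * w f) (sum_polyVonMangoldt hfm.ne_zero).symm
    _ = ∑ j ∈ Finset.range (n + 1), ∑ g ∈ monicOfDegree F j, ∑ f ∈ monicOfDegree F n with g ∣ f,
          (polyVonMangoldt g : A) * w f := by
      rw [Finset.sum_comm]
      refine Finset.sum_congr rfl fun j _ => ?_
      simp only [Finset.sum_filter]
      exact Finset.sum_comm
    _ = _ := by
      refine Finset.sum_congr rfl fun j hj => ?_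
      rw [Finset.sum_mul]
      refine Finset.sum_congr rfl fun g hg => ?_
      obtain ⟨hgm, rfl⟩ := mem_monicOfDegree.1 hg
      rw [sum_monicOfDegree_filter_dvd _ hgm (Finset.mem_range_succ_iff.1 hj), Finset.mul_sum]
      refine Finset.sum_congr rfl fun h hh => ?_
      rw [hw hgm (mem_monicOfDegree.1 hh).1, mul_assoc]

theorem sum_polyVonMangoldt_mul (hw : ∀ ⦃f g⦄, f.Monic → g.Monic → w (f * g) = w f * w g)
    (hone : w 1 = 1) (hS : ∀ n, ∑ f ∈ monicOfDegree F (n + 2), w f = 0) (n : ℕ) :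
    ∑ g ∈ monicOfDegree F (n + 1), polyVonMangoldt g * w g =
      (-1) ^ n * (∑ f ∈ monicOfDegree F 1, w f) ^ (n + 1) := by
  have hΛ0 : ∑ g ∈ monicOfDegree F 0, polyVonMangoldt g * w g = 0 := by
    simp [monicOfDegree_zero, polyVonMangoldt_of_not_isPrimePow not_isPrimePow_one]
  have hS0 : ∑ f ∈ monicOfDegree F 0, w f = 1 := by simp [monicOfDegree_zero, hone]
  induction n with
  | zero => simpa [Finset.sum_range_succ, hΛ0, hS0] using (natCast_mul_sum_monicOfDegree hw 1).symm
  | succ n ih =>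
    have hlow : ∀ j ∈ Finset.range (n + 1),
        (∑ g ∈ monicOfDegree F j, polyVonMangoldt g * w g) *
          ∑ h ∈ monicOfDegree F (n + 2 - j), w h = 0 := fun j hj => by
      obtain ⟨k, hk⟩ := Nat.exists_eq_add_of_lt (Finset.mem_range.1 hj)
      rw [show n + 2 - j = k + 2 by lia, hS, mul_zero]
    have hrec := natCast_mul_sum_monicOfDegree hw (n + 2)
    rw [hS, mul_zero, Finset.sum_range_succ, Finset.sum_range_succ, Finset.sum_eq_zero hlow,
      Nat.sub_self, hS0, show n + 2 - (n + 1) = 1 by lia, ih] at hrec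
    rw [pow_succ]
    linear_combination -hrec

end MonicPolynomials

section GaussWeight

open Polynomial

variable {F A : Type*} [Field F] [CommRing A] (χ : MulChar F A) (ψ : AddChar F A)

/-- The weight of a polynomial in the proof of the Hasse–Davenport relation. If `f` is monic and has
roots `x₁, …, xₙ` then this is `χ (x₁ ⋯ xₙ) * ψ (x₁ + ⋯ + xₙ)`. -/
def gaussWeight (f : F[X]) : A :=
  χ ((-1) ^ f.natDegree * f.coeff 0) * ψ (-f.nextCoeff)

theorem gaussWeight_one : gaussWeight χ ψ 1 = 1 := by simp [gaussWeight, nextCoeff]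

theorem gaussWeight_mul {f g : F[X]} (hf : f.Monic) (hg : g.Monic) :
    gaussWeight χ ψ (f * g) = gaussWeight χ ψ f * gaussWeight χ ψ g := by
  simp only [gaussWeight, hf.natDegree_mul hg, hf.nextCoeff_mul hg, mul_coeff_zero, neg_add,
    AddChar.map_add_eq_mul, pow_add, map_mul]
  ring

theorem gaussWeight_pow {f : F[X]} (hf : f.Monic) (k : ℕ) :
    gaussWeight χ ψ (f ^ k) = gaussWeight χ ψ f ^ k := by
  induction k with
  | zero => simp only [pow_zero, gaussWeight_one]
  | succ k ih => rw [pow_succ, gaussWeight_mul χ ψ (hf.pow k) hf, ih, pow_succ]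

theorem gaussWeight_X_pow_add_sum_monomial {n : ℕ} (v : Fin (n + 1) → F) :
    gaussWeight χ ψ (X ^ (n + 1) + ∑ i : Fin (n + 1), monomial i (v i)) =
      χ ((-1) ^ (n + 1) * v 0) * ψ (-v (Fin.last n)) := by
  set p : F[X] := ∑ i : Fin (n + 1), monomial i (v i)
  have hdeg : p.degree < (n + 1 : ℕ) :=
    (degree_sum_le _ _).trans_lt <| (Finset.sup_lt_iff (WithBot.bot_lt_coe _)).2 fun i _ =>
      (degree_monomial_le _ _).trans_lt (by exact_mod_cast i.2)
  have hnat : (X ^ (n + 1) + p).natDegree = n + 1 := by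
    rw [natDegree_add_eq_left_of_degree_lt (by rwa [degree_X_pow]), natDegree_X_pow]
  have hcoeff (i : Fin (n + 1)) : (X ^ (n + 1) + p).coeff i = v i := by
    simp [p, coeff_X_pow, coeff_monomial, i.2.ne, Fin.val_inj]
  have hnext : (X ^ (n + 1) + p).nextCoeff = v (Fin.last n) := by
    rw [nextCoeff_of_natDegree_pos (by lia), hnat]
    exact hcoeff (Fin.last n)
  rw [gaussWeight, hnat, hnext, ← hcoeff 0, Fin.val_zero]

variable [Fintype F]

theorem sum_gaussWeight_monicOfDegree_succ (n : ℕ) :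
    ∑ f ∈ monicOfDegree F (n + 1), gaussWeight χ ψ f =
      ∑ v : Fin (n + 1) → F, χ ((-1) ^ (n + 1) * v 0) * ψ (-v (Fin.last n)) := by
  rw [sum_monicOfDegree]
  exact Finset.sum_congr rfl fun v _ => gaussWeight_X_pow_add_sum_monomial χ ψ v

theorem sum_gaussWeight_monicOfDegree_one :
    ∑ f ∈ monicOfDegree F 1, gaussWeight χ ψ f = gaussSum χ ψ := by
  rw [sum_gaussWeight_monicOfDegree_succ, gaussSum, ← (Equiv.funUnique (Fin 1) F).symm.sum_comp,
    ← Equiv.sum_comp (Equiv.neg F)]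
  exact Finset.sum_congr rfl fun a _ => by simp

theorem sum_gaussWeight_monicOfDegree_add_two (hψ : ∑ a, ψ a = 0) (n : ℕ) :
    ∑ f ∈ monicOfDegree F (n + 2), gaussWeight χ ψ f = 0 := by
  have hψ' : ∑ a, ψ (-a) = 0 := (Equiv.sum_comp (Equiv.neg F) ψ).trans hψ
  rw [sum_gaussWeight_monicOfDegree_succ, ← (Fin.snocEquiv fun _ => F).sum_comp,
    Fintype.sum_prod_type_right]
  refine Finset.sum_eq_zero fun v _ => ?_
  simp only [Fin.snocEquiv_apply, Fin.snoc_last, ← Fin.castSucc_zero, Fin.snoc_castSucc,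
    ← Finset.mul_sum, hψ', mul_zero]

end GaussWeight

section HasseDavenport

open Polynomial IntermediateField Module

variable {F L : Type*} [Field F] [Field L] [Algebra F L]

theorem card_filter_aeval_eq_zero [Finite F] [Fintype L] [DecidableEq L] {P : F[X]}
    (hP : Irreducible P) (hdvd : P.natDegree ∣ finrank F L) :
    (Finset.univ.filter fun x : L => aeval x P = 0).card = P.natDegree := by
  have := Fact.mk hP
  have hfin : finrank F (AdjoinRoot P) = P.natDegree :=
    (AdjoinRoot.powerBasis hP.ne_zero).finrank.trans (AdjoinRoot.powerBasis_dim hP.ne_zero)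
  rw [← hfin, ← FiniteField.natCard_algHom_of_finrank_dvd (F := F) (hfin ▸ hdvd),
    Nat.card_congr (AdjoinRoot.equiv L F P hP.ne_zero), ← Fintype.card_eq_nat_card,
    Fintype.card_subtype]
  simp only [mem_aroots, ne_eq, hP.ne_zero, not_false_eq_true, true_and]

variable [FiniteDimensional F L]

theorem natDegree_minpoly_mul_finrank_adjoin (x : L) :
    (minpoly F x).natDegree * finrank F⟮x⟯ L = finrank F L := by
  rw [← adjoin.finrank (.of_finite F x), finrank_mul_finrank]

theorem minpoly_pow_finrank_adjoin_eq_iff {P : F[X]} (hPm : P.Monic) (hP : Irreducible P) {k : ℕ}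
    (hk : P.natDegree * k = finrank F L) {x : L} :
    minpoly F x ^ finrank F⟮x⟯ L = P ^ k ↔ aeval x P = 0 := by
  have hx : IsIntegral F x := .of_finite F x
  constructor
  · intro h
    rw [← (eq_and_eq_of_irreducible_pow_eq (minpoly.monic hx) hPm (minpoly.irreducible hx) hP
      finrank_pos.ne' h).1, minpoly.aeval]
  · intro h
    obtain rfl := minpoly.eq_of_irreducible_of_monic hP h hPm
    rw [Nat.eq_of_mul_eq_mul_left (minpoly.natDegree_pos hx)
      ((natDegree_minpoly_mul_finrank_adjoin x).trans hk.symm)]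

theorem gaussWeight_minpoly_pow {A : Type*} [CommRing A] (χ : MulChar F A) (ψ : AddChar F A)
    (x : L) :
    gaussWeight χ ψ (minpoly F x ^ finrank F⟮x⟯ L) =
      χ (Algebra.norm F x) * ψ (Algebra.trace F L x) := by
  have hx : IsIntegral F x := .of_finite F x
  have hnorm : Algebra.norm F (AdjoinSimple.gen F x) =
      (-1) ^ (minpoly F x).natDegree * (minpoly F x).coeff 0 := by
    simpa [minpoly_gen F x] using
      Algebra.PowerBasis.norm_gen_eq_coeff_zero_minpoly (adjoin.powerBasis hx)
  rw [gaussWeight_pow χ ψ (minpoly.monic hx), gaussWeight, ← hnorm, ← trace_adjoinSimpleGen hx,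
    Algebra.norm_eq_norm_adjoin F x, trace_eq_trace_adjoin F x, AddChar.map_nsmul_eq_pow, map_pow,
    mul_pow]

variable [Fintype F] [Fintype L]

theorem card_filter_minpoly_pow_eq [DecidableEq F] {g : F[X]}
    (hg : g ∈ monicOfDegree F (finrank F L)) :
    (Finset.univ.filter fun x : L => minpoly F x ^ finrank F⟮x⟯ L = g).card =
      polyVonMangoldt g := by
  classical
  obtain ⟨hgm, hdeg⟩ := mem_monicOfDegree.1 hg
  by_cases hpp : IsPrimePow g
  · obtain ⟨P, k, hPm, hP, hk, rfl⟩ := exists_monic_irreducible_pow_eq hgm hpp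
    rw [natDegree_pow, mul_comm] at hdeg
    simp_rw [minpoly_pow_finrank_adjoin_eq_iff hPm hP hdeg]
    rw [card_filter_aeval_eq_zero hP (Dvd.intro _ hdeg), polyVonMangoldt_pow hP hk]
  · rw [polyVonMangoldt_of_not_isPrimePow hpp, Finset.card_eq_zero, Finset.filter_eq_empty_iff]
    rintro x - rfl
    exact hpp ((minpoly.irreducible (.of_finite F x)).prime.isPrimePow.pow finrank_pos.ne')

theorem sum_minpoly_pow {A : Type*} [CommRing A] (w : F[X] → A) :
    ∑ x : L, w (minpoly F x ^ finrank F⟮x⟯ L) =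
      ∑ g ∈ monicOfDegree F (finrank F L), polyVonMangoldt g * w g := by
  classical
  have hmem (x : L) : minpoly F x ^ finrank F⟮x⟯ L ∈ monicOfDegree F (finrank F L) := by
    rw [mem_monicOfDegree, natDegree_pow, mul_comm, natDegree_minpoly_mul_finrank_adjoin]
    exact ⟨(minpoly.monic (.of_finite F x)).pow _, rfl⟩
  rw [← Finset.sum_fiberwise_of_maps_to' (fun x _ => hmem x) w]
  refine Finset.sum_congr rfl fun g hg => ?_
  rw [Finset.sum_const, card_filter_minpoly_pow_eq hg, nsmul_eq_mul]

/-- The **Hasse–Davenport lifting relation**. -/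
theorem hasse_davenport {A : Type*} [CommRing A] (χ : MulChar F A) {ψ : AddChar F A}
    (hψ : ∑ a, ψ a = 0) :
    ∑ x : L, χ (Algebra.norm F x) * ψ (Algebra.trace F L x) =
      (-1) ^ (finrank F L - 1) * gaussSum χ ψ ^ finrank F L := by
  obtain ⟨n, hn⟩ := Nat.exists_eq_add_one.2 (finrank_pos (R := F) (M := L))
  simp_rw [← gaussWeight_minpoly_pow]
  rw [sum_minpoly_pow, hn, sum_polyVonMangoldt_mul (fun _ _ => gaussWeight_mul χ ψ)
    (gaussWeight_one χ ψ) (sum_gaussWeight_monicOfDegree_add_two χ ψ hψ) n,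
    sum_gaussWeight_monicOfDegree_one, Nat.add_sub_cancel]

end HasseDavenport

section GroupAlgebra

open MonoidAlgebra

variable {G K : Type*}

/-- The element `∑ g, f g • [g]` of the group algebra of a finite group. -/
def groupAlgebraSum [Fintype G] [CommRing K] (f : G → K) : K[G] :=
  ofCoeff (Finsupp.equivFunOnFinite.symm f)

@[simp]
theorem coeff_groupAlgebraSum [Fintype G] [CommRing K] (f : G → K) (g : G) :
    (groupAlgebraSum f).coeff g = f g :=
  rfl

theorem groupAlgebraSum_eq_sum_single [Fintype G] [CommRing K] (f : G → K) :
    groupAlgebraSum f = ∑ g, single g (f g) := by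
  classical
  ext g
  simp [MonoidAlgebra.coeff_sum, Finsupp.finsetSum_apply, Finsupp.single_apply]

/-- The involution of the group algebra of a commutative group induced by `g ↦ g⁻¹`. -/
def groupAlgebraInv [CommGroup G] [CommRing K] : K[G] ≃ₐ[K] K[G] :=
  domCongr K K (MulEquiv.inv G)

@[simp]
theorem coeff_groupAlgebraInv [CommGroup G] [CommRing K] (x : K[G]) (g : G) :
    (groupAlgebraInv x).coeff g = x.coeff g⁻¹ := by
  simp [groupAlgebraInv]

variable [CommGroup G] [Fintype G] [CommRing K]

theorem coeff_mul_eq_sum (x y : K[G]) (g : G) :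
    (x * y).coeff g = ∑ h, x.coeff h * y.coeff (h⁻¹ * g) := by
  rw [coeff_mul_apply_left, Finsupp.sum_fintype _ _ fun _ => zero_mul _]

theorem mul_groupAlgebraSum_one (x : K[G]) :
    x * groupAlgebraSum 1 = (∑ g, x.coeff g) • groupAlgebraSum (1 : G → K) := by
  ext g
  simp [coeff_mul_eq_sum]

theorem single_mul_groupAlgebraSum_one (g : G) :
    single g 1 * groupAlgebraSum (1 : G → K) = groupAlgebraSum 1 := by
  ext h
  simp [coeff_single_mul_apply]

theorem groupAlgebraInv_groupAlgebraSum_one :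
    groupAlgebraInv (groupAlgebraSum (1 : G → K)) = groupAlgebraSum 1 := by
  ext g
  simp

end GroupAlgebra

section GaussElement

open MonoidAlgebra

theorem sum_units_eq_sum_sub {F K : Type*} [Field F] [Fintype F] [DecidableEq F] [AddCommGroup K]
    (f : F → K) : ∑ x : Fˣ, f x = ∑ x, f x - f 0 := by
  rw [eq_sub_iff_add_eq', ← Finset.add_sum_erase _ f (Finset.mem_univ 0), add_right_inj]
  exact Finset.sum_nbij (↑) (by simp) Units.val_injective.injOn
    (fun x hx => ⟨.mk0 x (by simpa using hx), by simp⟩) fun _ _ => rfl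

/-- The element `∑ x, ψ x • [x]` of the group algebra of the multiplicative group, the universal
Gauss sum of `ψ`. -/
def gaussElement {F K : Type*} [Field F] [Fintype F] [DecidableEq F] [CommRing K]
    (ψ : AddChar F K) : K[Fˣ] :=
  groupAlgebraSum fun x => ψ x

variable {F K : Type*} [Field F] [Fintype F] [DecidableEq F] [CommRing K] [IsDomain K]
  {ψ : AddChar F K}

theorem sum_units_addChar_mul (hψ : ψ.IsPrimitive) (a : F) :
    ∑ x : Fˣ, ψ (x * a) = (if a = 0 then (Fintype.card F : K) else 0) - 1 := by
  rw [sum_units_eq_sum_sub fun x => ψ (x * a), AddChar.sum_mulShift a hψ, zero_mul,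
    AddChar.map_zero_eq_one, Nat.cast_ite, Nat.cast_zero]

theorem gaussElement_mul_groupAlgebraSum_one (hψ : ψ.IsPrimitive) :
    gaussElement ψ * groupAlgebraSum 1 = -groupAlgebraSum 1 := by
  have hsum : ∑ x : Fˣ, ψ x = -1 := by simpa using sum_units_addChar_mul hψ 1
  rw [mul_groupAlgebraSum_one, ← neg_one_smul K, ← hsum]
  rfl

theorem gaussElement_pow_mul_groupAlgebraSum_one (hψ : ψ.IsPrimitive) (n : ℕ) :
    gaussElement ψ ^ n * groupAlgebraSum 1 = (-1) ^ n * groupAlgebraSum 1 := by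
  induction n with
  | zero => simp only [pow_zero]
  | succ n ih =>
    rw [pow_succ, mul_assoc, gaussElement_mul_groupAlgebraSum_one hψ, mul_neg, ih, pow_succ,
      mul_neg_one, neg_mul]

theorem gaussElement_mul_groupAlgebraInv (hψ : ψ.IsPrimitive) :
    gaussElement ψ * groupAlgebraInv (gaussElement ψ) =
      (Fintype.card F : K) • single (-1) 1 - groupAlgebraSum 1 := by
  ext t
  have hmul (x : Fˣ) : ψ x * ψ ↑(x⁻¹ * t)⁻¹ = ψ (x * (1 + (t⁻¹ : Fˣ))) := by
    rw [← AddChar.map_add_eq_mul, mul_inv_rev, inv_inv, Units.val_mul, mul_add, mul_one,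
      mul_comm (x : F) ((t⁻¹ : Fˣ) : F)]
  have ht : 1 + ((t⁻¹ : Fˣ) : F) = 0 ↔ -1 = t := by
    rw [← neg_eq_iff_add_eq_zero, ← Units.val_one, ← Units.val_neg, Units.val_inj, eq_comm,
      inv_eq_iff_eq_inv, inv_neg_one, eq_comm]
  simp_rw [coeff_mul_eq_sum, coeff_groupAlgebraInv, gaussElement, coeff_groupAlgebraSum, hmul]
  rw [sum_units_addChar_mul hψ]
  simp only [ht]
  simp [Finsupp.single_apply]

end GaussElement

section TraceKernel

open MonoidAlgebra Module

/-- The additive character `x ↦ ψ (Tr x)` of an extension of the field on which `ψ` is defined. -/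
def traceAddChar {E K : Type*} (F : Type*) [Field E] [Field F] [Algebra E F] [Monoid K]
    (ψ : AddChar E K) : AddChar F K :=
  ψ.compAddMonoidHom (Algebra.trace E F).toAddMonoidHom

/-- The sum in the group algebra of `Fˣ` of the units of a subfield `E`. -/
def subfieldUnitsSum (E F K : Type*) [Field E] [Fintype E] [DecidableEq E] [Field F] [Algebra E F]
    [CommRing K] : K[Fˣ] :=
  ∑ e : Eˣ, single (Units.map (algebraMap E F).toMonoidHom e) 1

/-- The sum in the group algebra of `Fˣ` of the units of trace zero over a subfield `E`. -/
def traceKernelSum (E F K : Type*) [Field E] [DecidableEq E] [Field F] [Fintype F] [DecidableEq F]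
    [Algebra E F] [CommRing K] : K[Fˣ] :=
  groupAlgebraSum fun x => if Algebra.trace E F x = 0 then 1 else 0

theorem traceAddChar_inv {E F K : Type*} [Field E] [Field F] [Algebra E F] [CommRing K]
    (ψ : AddChar E K) : (traceAddChar F ψ)⁻¹ = traceAddChar F ψ⁻¹ := by
  ext x
  simp [traceAddChar, AddChar.inv_apply]

theorem traceAddChar_ne_one {E F K : Type*} [Field E] [Field F] [Algebra E F] [CommRing K]
    [FiniteDimensional E F] [Algebra.IsSeparable E F] {ψ : AddChar E K} (hψ : ψ ≠ 1) :
    traceAddChar F ψ ≠ 1 := by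
  refine fun h => hψ ?_
  ext e
  obtain ⟨x, rfl⟩ := Algebra.trace_surjective E F e
  exact DFunLike.congr_fun h x

theorem isPrimitive_traceAddChar {E F K : Type*} [Field E] [Field F] [Algebra E F] [CommRing K]
    [FiniteDimensional E F] [Algebra.IsSeparable E F] {ψ : AddChar E K} (hψ : ψ ≠ 1) :
    (traceAddChar F ψ).IsPrimitive :=
  .of_ne_one (traceAddChar_ne_one hψ)

section
variable {E F K : Type*} [Field E] [Fintype E] [DecidableEq E] [Field F] [Algebra E F] [CommRing K]

theorem single_mul_subfieldUnitsSum (e : Eˣ) :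
    single (Units.map (algebraMap E F).toMonoidHom e) 1 * subfieldUnitsSum E F K =
      subfieldUnitsSum E F K := by
  simp_rw [subfieldUnitsSum, Finset.mul_sum, single_mul_single, ← map_mul, mul_one]
  exact Equiv.sum_comp (Equiv.mulLeft e) fun e' =>
    single (Units.map (algebraMap E F).toMonoidHom e') (1 : K)

theorem single_neg_one_mul_subfieldUnitsSum :
    single (-1) 1 * subfieldUnitsSum E F K = subfieldUnitsSum E F K := by
  convert single_mul_subfieldUnitsSum (-1 : Eˣ)
  ext
  simp

theorem subfieldUnitsSum_mul_self : subfieldUnitsSum E F K * subfieldUnitsSum E F K =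
    (Fintype.card E - 1 : K) • subfieldUnitsSum E F K := by
  nth_rw 1 [subfieldUnitsSum]
  rw [Finset.sum_mul, Finset.sum_congr rfl fun e _ => single_mul_subfieldUnitsSum e,
    Finset.sum_const, Finset.card_univ, Fintype.card_units, ← Nat.cast_smul_eq_nsmul K,
    Nat.cast_pred Fintype.card_pos]

theorem groupAlgebraInv_subfieldUnitsSum :
    groupAlgebraInv (subfieldUnitsSum E F K) = subfieldUnitsSum E F K := by
  rw [subfieldUnitsSum, map_sum, ← Equiv.sum_comp (Equiv.inv Eˣ)]
  simp [groupAlgebraInv]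

variable [Fintype F] [DecidableEq F]

theorem subfieldUnitsSum_mul_groupAlgebraSum_one :
    subfieldUnitsSum E F K * groupAlgebraSum 1 =
    (Fintype.card E - 1 : K) • groupAlgebraSum 1 := by
  simp_rw [subfieldUnitsSum, Finset.sum_mul, single_mul_groupAlgebraSum_one, Finset.sum_const,
    Finset.card_univ, Fintype.card_units, ← Nat.cast_smul_eq_nsmul K,
    Nat.cast_pred Fintype.card_pos]

theorem groupAlgebraSum_one_mul_self :
    groupAlgebraSum (1 : Fˣ → K) * groupAlgebraSum 1 =
    (Fintype.card F - 1 : K) • groupAlgebraSum 1 := by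
  simp_rw [mul_groupAlgebraSum_one, coeff_groupAlgebraSum, Pi.one_apply, Finset.sum_const,
    Finset.card_univ, Fintype.card_units, nsmul_one,
    Nat.cast_pred Fintype.card_pos]

theorem subfieldUnitsSum_mul_gaussElement [IsDomain K] {ψ : AddChar E K} (hψ : ψ.IsPrimitive) :
    subfieldUnitsSum E F K * gaussElement (traceAddChar F ψ) =
      (Fintype.card E : K) • traceKernelSum E F K - groupAlgebraSum 1 := by
  ext t
  have hcoeff (e : Eˣ) : (single (Units.map (algebraMap E F).toMonoidHom e⁻¹) (1 : K) *
      gaussElement (traceAddChar F ψ)).coeff t = ψ (e * Algebra.trace E F t) := by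
    simp [gaussElement, traceAddChar, coeff_single_mul_apply, ← Algebra.smul_def]
  rw [subfieldUnitsSum, ← Equiv.sum_comp (Equiv.inv Eˣ), Finset.sum_mul, MonoidAlgebra.coeff_sum,
    Finsupp.finsetSum_apply]
  simp_rw [Equiv.inv_apply, hcoeff]
  rw [sum_units_addChar_mul hψ]
  simp [traceKernelSum]

end

end TraceKernel

section GaussCube

open MonoidAlgebra Module

variable {E F K : Type*} [Field E] [Fintype E] [DecidableEq E] [Field F] [Fintype F]
  [DecidableEq F] [Algebra E F] [Field K] {ψ : AddChar E K}

local notation "q" => (Fintype.card E : K)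
local notation "γ" => gaussElement (traceAddChar F ψ)
local notation "δ" => traceKernelSum E F K
local notation "ε" => subfieldUnitsSum E F K
local notation "σ" => groupAlgebraSum (1 : Fˣ → K)

theorem smul_traceKernelSum_mul_groupAlgebraSum_one (hψ : ψ ≠ 1) :
    q • (δ * σ) = (Fintype.card F - q) • σ := by
  have hεγ := subfieldUnitsSum_mul_gaussElement (F := F) (AddChar.IsPrimitive.of_ne_one hψ)
  have hγσ := gaussElement_mul_groupAlgebraSum_one (isPrimitive_traceAddChar (F := F) hψ)
  have hσσ := groupAlgebraSum_one_mul_self (F := F) (K := K)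
  have hεσ := subfieldUnitsSum_mul_groupAlgebraSum_one (E := E) (F := F) (K := K)
  linear_combination (norm := algebra with K) -σ * hεγ + ε * hγσ + hσσ - hεσ

theorem smul_gaussElement_mul_groupAlgebraInv_traceKernelSum (hψ : ψ ≠ 1) :
    q • (γ * groupAlgebraInv δ) = (Fintype.card F : K) • ε - q • σ := by
  have hεγ := congrArg groupAlgebraInv <|
    subfieldUnitsSum_mul_gaussElement (F := F) (AddChar.IsPrimitive.of_ne_one hψ)
  have hγγ := gaussElement_mul_groupAlgebraInv (isPrimitive_traceAddChar (F := F) hψ)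
  have hγσ := gaussElement_mul_groupAlgebraSum_one (isPrimitive_traceAddChar (F := F) hψ)
  have hεσ := subfieldUnitsSum_mul_groupAlgebraSum_one (E := E) (F := F) (K := K)
  have hneg := single_neg_one_mul_subfieldUnitsSum (E := E) (F := F) (K := K)
  simp only [map_mul, map_sub, map_smul, groupAlgebraInv_subfieldUnitsSum,
    groupAlgebraInv_groupAlgebraSum_one] at hεγ
  linear_combination (norm := algebra with K)
    -γ * hεγ + ε * hγγ + hγσ + (Fintype.card F : K) • hneg - hεσ

variable [CharZero K]

theorem gaussElement_mul_groupAlgebraInv_traceKernelSum (hE : finrank E F = 3) (hψ : ψ ≠ 1) :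
    γ * groupAlgebraInv δ = q ^ 2 • ε - σ := by
  have h := smul_gaussElement_mul_groupAlgebraInv_traceKernelSum (F := F) hψ
  rw [card_eq_pow_finrank (K := E) (V := F), hE, Nat.cast_pow] at h
  have hq : q ≠ 0 := Nat.cast_ne_zero.2 Fintype.card_ne_zero
  refine smul_right_injective _ hq (h.trans ?_)
  algebra

theorem smul_gaussElement_pow_three_mul_groupAlgebraInv_traceKernelSum (hE : finrank E F = 3)
    (hψ : ψ ≠ 1) : (q - 1) • (γ ^ 3 * groupAlgebraInv δ) =
      q ^ 4 • δ ^ 2 - (q ^ 5 - 2 * q ^ 3 + q ^ 2 + q - 1) • σ := by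
  have hγδ := gaussElement_mul_groupAlgebraInv_traceKernelSum (F := F) hE hψ
  have hεγ := subfieldUnitsSum_mul_gaussElement (F := F) (AddChar.IsPrimitive.of_ne_one hψ)
  have hγσ := gaussElement_mul_groupAlgebraSum_one (isPrimitive_traceAddChar (F := F) hψ)
  have hδσ := smul_traceKernelSum_mul_groupAlgebraSum_one (F := F) hψ
  have hσσ := groupAlgebraSum_one_mul_self (F := F) (K := K)
  have hεε := subfieldUnitsSum_mul_self (E := E) (F := F) (K := K)
  rw [card_eq_pow_finrank (K := E) (V := F), hE, Nat.cast_pow] at hδσ hσσ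
  linear_combination (norm := algebra with K)
    (q - 1) • (γ ^ 2 * hγδ) - (q - 1) • ((γ - 1) * hγσ) - q ^ 2 • (γ ^ 2 * hεε) +
      q ^ 2 • ((ε * γ + q • δ - σ) * hεγ) - (2 * q ^ 2) • hδσ + q ^ 2 • hσσ

theorem gaussElement_pow_three_mul_groupAlgebraInv_traceKernelSum_sq (hE : finrank E F = 3)
    (hψ : ψ ≠ 1) : γ ^ 3 * groupAlgebraInv δ ^ 2 =
      (q ^ 5 * (q - 1)) • δ - ((q ^ 4 - 2 * q ^ 2) * (q - 1) + (q ^ 3 - 1)) • σ := by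
  have hγδ := gaussElement_mul_groupAlgebraInv_traceKernelSum (F := F) hE hψ
  have hεγ := subfieldUnitsSum_mul_gaussElement (F := F) (AddChar.IsPrimitive.of_ne_one hψ)
  have hγσ := gaussElement_mul_groupAlgebraSum_one (isPrimitive_traceAddChar (F := F) hψ)
  have hεσ := subfieldUnitsSum_mul_groupAlgebraSum_one (E := E) (F := F) (K := K)
  have hσσ := groupAlgebraSum_one_mul_self (F := F) (K := K)
  have hεε := subfieldUnitsSum_mul_self (E := E) (F := F) (K := K)
  rw [card_eq_pow_finrank (K := E) (V := F), hE, Nat.cast_pow] at hσσ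
  linear_combination (norm := algebra with K)
    γ * (γ * groupAlgebraInv δ + q ^ 2 • ε - σ) * hγδ + q ^ 4 • (γ * hεε) +
      (q ^ 4 * (q - 1)) • hεγ - (2 * q ^ 2) • (γ * hεσ) + γ * hσσ +
      (q ^ 3 - 1 - 2 * q ^ 2 * (q - 1)) • hγσ

end GaussCube

section TraceKernelSpan

open MonoidAlgebra Module

/-- The span of `σ`, `δ` and `δ ^ 2` in the group algebra of `Fˣ`, where `σ` is the sum of all units
and `δ` the sum of those of trace zero. -/
def traceKernelSpan (E F K : Type*) [Field E] [DecidableEq E] [Field F] [Fintype F] [DecidableEq F]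
    [Algebra E F] [Field K] : Submodule K K[Fˣ] :=
  Submodule.span K {groupAlgebraSum 1, traceKernelSum E F K, traceKernelSum E F K ^ 2}

variable {E F K : Type*} [Field E] [DecidableEq E] [Field F] [Fintype F] [DecidableEq F]
  [Algebra E F] [Field K] {ψ : AddChar E K}

theorem gaussElement_pow_three_mul_groupAlgebraInv_mem_traceKernelSpan [CharZero K]
    (hE : finrank E F = 3) (hψ : ψ ≠ 1) {x : K[Fˣ]} (hx : x ∈ traceKernelSpan E F K) :
    gaussElement (traceAddChar F ψ) ^ 3 * groupAlgebraInv x ∈ traceKernelSpan E F K := by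
  let := Fintype.ofInjective _ (algebraMap E F).injective
  have hσ : groupAlgebraSum 1 ∈ traceKernelSpan E F K := Submodule.subset_span (by simp)
  have hδ : traceKernelSum E F K ∈ traceKernelSpan E F K := Submodule.subset_span (by simp)
  have hδ' : traceKernelSum E F K ^ 2 ∈ traceKernelSpan E F K := Submodule.subset_span (by simp)
  obtain ⟨a, b, c, rfl⟩ := Submodule.mem_span_triple.1 hx
  simp only [map_add, map_smul, map_pow, mul_add, mul_smul_comm,
    groupAlgebraInv_groupAlgebraSum_one]
  refine add_mem (add_mem (Submodule.smul_mem _ _ ?_) (Submodule.smul_mem _ _ ?_))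
    (Submodule.smul_mem _ _ ?_)
  · rw [gaussElement_pow_mul_groupAlgebraSum_one (isPrimitive_traceAddChar hψ),
      Odd.neg_one_pow (by decide), neg_one_mul]
    exact neg_mem hσ
  · have hq : (Fintype.card E - 1 : K) ≠ 0 :=
      sub_ne_zero.2 (Nat.cast_ne_one.2 Fintype.one_lt_card.ne')
    rw [← Submodule.smul_mem_iff _ hq,
      smul_gaussElement_pow_three_mul_groupAlgebraInv_traceKernelSum hE hψ]
    exact sub_mem (Submodule.smul_mem _ _ hδ') (Submodule.smul_mem _ _ hσ)
  · rw [gaussElement_pow_three_mul_groupAlgebraInv_traceKernelSum_sq hE hψ]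
    exact sub_mem (Submodule.smul_mem _ _ hδ) (Submodule.smul_mem _ _ hσ)

end TraceKernelSpan

section UniversalGaussSum

open MonoidAlgebra Module

/-- The multiplicative character `x ↦ [x]` with values in the group algebra, through which every
other multiplicative character factors. -/
def universalMulChar (F K : Type*) [Field F] [CommRing K] : MulChar F K[Fˣ] :=
  MulChar.ofUnitHom (MonoidAlgebra.of K Fˣ).toHomUnits

theorem universalMulChar_coe_mul_algebraMap {F K : Type*} [Field F] [CommRing K] (u : Fˣ) (k : K) :
    universalMulChar F K u * algebraMap K K[Fˣ] k = single u k := by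
  rw [universalMulChar, MulChar.ofUnitHom_coe]
  simp [MonoidAlgebra.coe_algebraMap, single_mul_single]

variable {F L K : Type*} [Field F] [Fintype F] [DecidableEq F] [CommRing K]

theorem gaussSum_universalMulChar (ψ : AddChar F K) :
    gaussSum (universalMulChar F K) ((algebraMap K K[Fˣ]).toMonoidHom.compAddChar ψ) =
      gaussElement ψ := by
  have h := sum_units_eq_sum_sub fun a => universalMulChar F K a * algebraMap K K[Fˣ] (ψ a)
  rw [MulChar.map_zero, zero_mul, sub_zero] at h
  rw [gaussElement, groupAlgebraSum_eq_sum_single]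
  exact h.symm.trans (Finset.sum_congr rfl fun u _ => universalMulChar_coe_mul_algebraMap u (ψ u))

variable [Field L] [Fintype L] [DecidableEq L] [Algebra F L]

theorem gaussElement_pow_finrank {ψ : AddChar F K} (hψ : ∑ a, ψ a = 0) (hL : Odd (finrank F L)) :
    gaussElement ψ ^ finrank F L =
      ∑ y : Lˣ, single (Units.map (Algebra.norm F) y) (traceAddChar L ψ y) := by
  set χ := universalMulChar F K
  set ψ' : AddChar F K[Fˣ] := (algebraMap K K[Fˣ]).toMonoidHom.compAddChar ψ
  have hψ' : ∑ a, ψ' a = 0 :=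
    (map_sum (algebraMap K K[Fˣ]) ψ _).symm.trans (by rw [hψ, map_zero])
  have hunits := sum_units_eq_sum_sub fun y : L =>
    χ (Algebra.norm F y) * ψ' (Algebra.trace F L y)
  rw [Algebra.norm_zero, MulChar.map_zero, zero_mul, sub_zero, hasse_davenport χ hψ',
    gaussSum_universalMulChar, (hL.tsub_odd odd_one).neg_one_pow, one_mul] at hunits
  exact hunits.symm.trans <| Finset.sum_congr rfl fun y _ =>
    universalMulChar_coe_mul_algebraMap (Units.map (Algebra.norm F) y) _

theorem coeff_gaussElement_pow_finrank_mul {ψ : AddChar F K} (hψ : ∑ a, ψ a = 0)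
    (hL : Odd (finrank F L)) (f : Fˣ → K) (b : Lˣ) :
    (gaussElement ψ ^ finrank F L * groupAlgebraInv (groupAlgebraSum f)).coeff
        (Units.map (Algebra.norm F) b) =
      ∑ x : Lˣ, f (Units.map (Algebra.norm F) x) * traceAddChar L ψ (b * x) := by
  rw [gaussElement_pow_finrank hψ hL, Finset.sum_mul, MonoidAlgebra.coeff_sum,
    Finsupp.finsetSum_apply, ← Equiv.sum_comp (Equiv.mulLeft b)]
  refine Finset.sum_congr rfl fun x _ => ?_
  rw [coeff_single_mul_apply, coeff_groupAlgebraInv, coeff_groupAlgebraSum, mul_comm]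
  simp

end UniversalGaussSum

section TraceZeroFactors

open Module

theorem linearIndependent_one_self_sq {E F : Type*} [Field E] [Field F] [Algebra E F]
    (hE : finrank E F = 3) {t : F} (ht : t ∉ (algebraMap E F).range) :
    LinearIndependent E ![1, t, t ^ 2] := by
  have : FiniteDimensional E F := .of_finrank_pos (hE ▸ three_pos)
  have hint : IsIntegral E t := .of_finite E t
  have hdeg : (minpoly E t).natDegree = 3 :=
    ((Nat.dvd_prime Nat.prime_three).1 (hE ▸ minpoly.degree_dvd hint)).resolve_left fun h =>
      ht (minpoly.natDegree_eq_one_iff.1 h)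
  have h := linearIndependent_pow (K := E) t
  rw [hdeg] at h
  convert h with i
  fin_cases i <;> simp

variable {E F : Type*} [Field E] [Field F] [Algebra E F]

theorem finrank_ker_trace_add_one [FiniteDimensional E F] [Algebra.IsSeparable E F] :
    finrank E (Algebra.trace E F).ker + 1 = finrank E F := by
  rw [← LinearMap.finrank_range_add_finrank_ker (Algebra.trace E F),
    LinearMap.range_eq_top.2 (Algebra.trace_surjective E F), finrank_top, finrank_self, add_comm]

theorem span_pair_eq_ker_trace [Algebra.IsSeparable E F] (hE : finrank E F = 3)
    {v w : F} (hv : Algebra.trace E F v = 0) (hw : Algebra.trace E F w = 0)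
    (hvw : LinearIndependent E ![v, w]) :
    Submodule.span E {v, w} = (Algebra.trace E F).ker := by
  have : FiniteDimensional E F := .of_finrank_pos (hE ▸ three_pos)
  refine Submodule.eq_of_le_of_finrank_eq
    (Submodule.span_le.2 (by simp [Set.insert_subset_iff, hv, hw])) ?_
  have hker := finrank_ker_trace_add_one (E := E) (F := F)
  have hspan := finrank_span_eq_card hvw
  rw [Matrix.range_cons_cons_empty, Fintype.card_fin] at hspan
  lia

theorem exists_smul_eq_or_of_trace_div_eq_zero [Algebra.IsSeparable E F]
    (hE : finrank E F = 3) {b v w : F} (hv0 : v ≠ 0) (hw0 : w ≠ 0)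
    (hv : Algebra.trace E F v = 0) (hw : Algebra.trace E F w = 0)
    (hbv : Algebra.trace E F (b / v) = 0) (hbw : Algebra.trace E F (b / w) = 0) :
    (∃ e : E, e • v = w) ∨ ∃ e : E, b = e • (v * w) := by
  refine or_iff_not_imp_left.2 fun hvw => ?_
  have hspan := span_pair_eq_ker_trace hE hv hw
    ((LinearIndependent.pair_iff' hv0).2 (not_exists.1 hvw))
  obtain ⟨α, β, hα⟩ := Submodule.mem_span_pair.1 (hspan.ge hbv)
  obtain ⟨α', β', hα'⟩ := Submodule.mem_span_pair.1 (hspan.ge hbw)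
  have ht : w / v ∉ (algebraMap E F).range := fun ⟨e, he⟩ =>
    hvw ⟨e, by rw [Algebra.smul_def, he, div_mul_cancel₀ w hv0]⟩
  have hrel : α • (1 : F) + (β - α') • (w / v) + (-β') • (w / v) ^ 2 = 0 := by
    have hb : (α • v + β • w) * v = (α' • v + β' • w) * w := by
      rw [hα, hα', div_mul_cancel₀ _ hv0, div_mul_cancel₀ _ hw0]
    simp only [Algebra.smul_def, map_sub, map_neg] at hb ⊢
    field_simp
    linear_combination hb
  have hα0 : α = 0 := Fintype.linearIndependent_iff.1 (linearIndependent_one_self_sq hE ht)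
    ![α, β - α', -β'] (by simpa [Fin.sum_univ_three] using hrel) 0
  refine ⟨β, ?_⟩
  rw [← div_mul_cancel₀ b hv0, ← hα, hα0, zero_smul, zero_add, smul_mul_assoc, mul_comm]

theorem ncard_orbit_units [Fintype E] (v : Fˣ) :
    (MulAction.orbit Eˣ v).ncard = Fintype.card E - 1 := by
  have hinj : Function.Injective fun e : Eˣ => e • v := fun e e' h => by
    simpa [Units.ext_iff, Units.smul_def, Algebra.smul_def] using h
  rw [MulAction.orbit, Set.ncard_range_of_injective hinj, Nat.card_units,
    Nat.card_eq_fintype_card]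

theorem trace_pow_char (p : ℕ) [Finite F] [Fact p.Prime] [CharP F p] (x : F) :
    Algebra.trace E F (x ^ p) = Algebra.trace E F x ^ p := by
  apply FaithfulSMul.algebraMap_injective E F
  simp_rw [map_pow, FiniteField.algebraMap_trace_eq_sum_pow, sum_pow_char p, ← pow_mul, mul_comm]

section

variable (E)

/-- The factors `v` of `b` such that both `v` and `b / v` have trace zero over the subfield `E`. -/
def traceZeroFactors [DecidableEq E] [Fintype F] [DecidableEq F] (b : F) : Finset Fˣ :=
  {v | Algebra.trace E F v = 0 ∧ Algebra.trace E F (b / v) = 0}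

end

variable [DecidableEq E] [Fintype F] [DecidableEq F]

theorem mem_traceZeroFactors {b : F} {v : Fˣ} : v ∈ traceZeroFactors E b ↔
    Algebra.trace E F v = 0 ∧ Algebra.trace E F (b / v) = 0 := by
  simp [traceZeroFactors]

theorem traceZeroFactors_smul {e : E} (he : e ≠ 0) (b : F) :
    traceZeroFactors E (e • b) = traceZeroFactors E b := by
  ext v
  simp [mem_traceZeroFactors, smul_div_assoc, he]

theorem coeff_traceKernelSum_mul_self {K : Type*} [CommRing K] (b : Fˣ) :
    (traceKernelSum E F K * traceKernelSum E F K).coeff b = (traceZeroFactors E (b : F)).card := by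
  simp [coeff_mul_eq_sum, traceKernelSum, traceZeroFactors, ← ite_and, Finset.sum_boole,
    div_eq_inv_mul, and_comm]

theorem smul_mem_traceZeroFactors {b : F} {v : Fˣ} (hv : v ∈ traceZeroFactors E b) (e : Eˣ) :
    e • v ∈ traceZeroFactors E b := by
  rw [mem_traceZeroFactors] at hv ⊢
  have hdiv : b / ↑(e • v) = (↑e⁻¹ : E) • (b / v) := by
    simp only [Units.val_smul, Units.smul_def, Algebra.smul_def, Units.val_inv_eq_inv_val, map_inv₀]
    field_simp
  rw [hdiv, map_smul, hv.2, smul_zero, Units.val_smul, Units.smul_def, map_smul, hv.1, smul_zero]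
  exact ⟨rfl, rfl⟩

theorem div_mem_traceZeroFactors {b v : Fˣ} (hv : v ∈ traceZeroFactors E (b : F)) :
    b / v ∈ traceZeroFactors E (b : F) := by
  rw [mem_traceZeroFactors] at hv ⊢
  simpa using hv.symm

theorem coe_traceZeroFactors_eq_orbit_union [Algebra.IsSeparable E F] (hE : finrank E F = 3)
    {b v : Fˣ} (hv : v ∈ traceZeroFactors E (b : F)) :
    (traceZeroFactors E (b : F) : Set Fˣ) =
      MulAction.orbit Eˣ v ∪ MulAction.orbit Eˣ (b / v) := by
  ext w
  refine ⟨fun hw => ?_, ?_⟩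
  · have hv' := mem_traceZeroFactors.1 hv
    have hw' := mem_traceZeroFactors.1 hw
    obtain ⟨e, he⟩ | ⟨e, he⟩ := exists_smul_eq_or_of_trace_div_eq_zero hE v.ne_zero w.ne_zero
      hv'.1 hw'.1 hv'.2 hw'.2
    · have he0 : e ≠ 0 := by rintro rfl; simp [eq_comm] at he
      exact .inl ⟨.mk0 e he0, Units.ext he⟩
    · have he0 : e ≠ 0 := by rintro rfl; simp at he
      refine .inr (MulAction.mem_orbit_symm.1 ⟨.mk0 e he0, Units.ext ?_⟩)
      rw [Units.val_div_eq_div_val, he, mul_comm, ← smul_mul_assoc,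
        mul_div_cancel_right₀ _ v.ne_zero]
      rfl
  · rintro (⟨e, rfl⟩ | ⟨e, rfl⟩)
    · exact smul_mem_traceZeroFactors hv e
    · exact smul_mem_traceZeroFactors (div_mem_traceZeroFactors hv) e

theorem card_traceZeroFactors_eq_of_mem_orbit [Fintype E] [Algebra.IsSeparable E F]
    (hE : finrank E F = 3) {b v : Fˣ} (hv : v ∈ traceZeroFactors E (b : F))
    (hb : b / v ∈ MulAction.orbit Eˣ v) :
    (traceZeroFactors E (b : F)).card = Fintype.card E - 1 := by
  rw [← Set.ncard_coe_finset, coe_traceZeroFactors_eq_orbit_union hE hv,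
    MulAction.orbit_eq_iff.2 hb, Set.union_self, ncard_orbit_units]

theorem card_traceZeroFactors_eq_of_notMem_orbit [Fintype E] [Algebra.IsSeparable E F]
    (hE : finrank E F = 3) {b v : Fˣ} (hv : v ∈ traceZeroFactors E (b : F))
    (hb : b / v ∉ MulAction.orbit Eˣ v) :
    (traceZeroFactors E (b : F)).card = 2 * (Fintype.card E - 1) := by
  have hdisj := (MulAction.orbit.eq_or_disjoint (G := Eˣ) v (b / v)).resolve_left fun h =>
    hb (MulAction.orbit_eq_iff.1 h.symm)
  rw [← Set.ncard_coe_finset, coe_traceZeroFactors_eq_orbit_union hE hv,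
    Set.ncard_union_eq hdisj, ncard_orbit_units, ncard_orbit_units, two_mul]

theorem card_traceZeroFactors_zero [Fintype E] :
    (traceZeroFactors E (0 : F)).card = Fintype.card E ^ (finrank E F - 1) - 1 := by
  have himage : Units.val '' (traceZeroFactors E (0 : F) : Set Fˣ) =
      ((Algebra.trace E F).ker : Set F) \ {0} := by
    ext x
    refine ⟨?_, fun hx => ⟨.mk0 x hx.2, ?_, rfl⟩⟩
    · rintro ⟨v, hv, rfl⟩
      exact ⟨(mem_traceZeroFactors.1 hv).1, v.ne_zero⟩
    · exact mem_traceZeroFactors.2 ⟨hx.1, by simp⟩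
  have hcard : ((Algebra.trace E F).ker : Set F).ncard =
      Fintype.card E ^ (finrank E F - 1) := by
    rw [← finrank_ker_trace_add_one (E := E) (F := F), Nat.add_sub_cancel,
      ← Nat.card_eq_fintype_card, ← Module.natCard_eq_pow_finrank]
    rfl
  rw [← Set.ncard_coe_finset, ← Set.ncard_image_of_injective _ Units.val_injective, himage,
    Set.ncard_sdiff_singleton_of_mem (zero_mem _), hcard]

theorem card_traceZeroFactors_of_trace_eq_zero [CharP F 2] [Fintype E] (hE : finrank E F = 3)
    {b : Fˣ} (hb : Algebra.trace E F b = 0) :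
    (traceZeroFactors E (b : F)).card = Fintype.card E - 1 := by
  obtain ⟨r, hr⟩ := FiniteField.isSquare_of_char_two (ringChar.eq F 2) (b : F)
  have hr0 : r ≠ 0 := by rintro rfl; simp at hr
  have htr : Algebra.trace E F r = 0 := by
    rwa [hr, ← pow_two, trace_pow_char, sq_eq_zero_iff] at hb
  have hb : b = .mk0 r hr0 * .mk0 r hr0 := Units.ext hr
  refine card_traceZeroFactors_eq_of_mem_orbit hE (v := .mk0 r hr0) ?_ ?_
  · simp [mem_traceZeroFactors, hr, htr]
  · rw [hb, mul_div_cancel_right]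
    exact MulAction.mem_orbit_self _

theorem card_traceZeroFactors_of_trace_ne_zero [CharP F 2] [Fintype E] (hE : finrank E F = 3)
    {b : Fˣ} (hb : Algebra.trace E F b ≠ 0) :
    (traceZeroFactors E (b : F)).card = 2 * (Fintype.card E - 1) ∨
      (traceZeroFactors E (b : F)).card = 0 := by
  refine or_iff_not_imp_right.2 fun h => ?_
  obtain ⟨v, hv⟩ := Finset.card_ne_zero.1 h
  refine card_traceZeroFactors_eq_of_notMem_orbit hE hv ?_
  rintro ⟨e, he⟩
  have : CharP E 2 := (Algebra.charP_iff E F 2).2 inferInstance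
  obtain ⟨c, hc⟩ := FiniteField.isSquare_of_char_two (ringChar.eq E 2) (e : E)
  have hb' : (b : F) = (c • (v : F)) ^ 2 := by
    have hbv : (e : E) • (v : F) = b / v := by rw [← Units.val_div_eq_div_val, ← he]; rfl
    rw [← div_mul_cancel₀ (b : F) v.ne_zero, ← hbv, hc, _root_.smul_pow, smul_mul_assoc, ← pow_two,
      ← pow_two]
  rw [hb', trace_pow_char, map_smul, (mem_traceZeroFactors.1 hv).1] at hb
  simp at hb

theorem trace_eq_zero_iff_card_traceZeroFactors [CharP F 2] [Fintype E] (hE : finrank E F = 3)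
    (b : Fˣ) :
    Algebra.trace E F b = 0 ↔ (traceZeroFactors E (b : F)).card = Fintype.card E - 1 := by
  refine ⟨card_traceZeroFactors_of_trace_eq_zero hE, fun h => by_contra fun hb => ?_⟩
  have hq := Fintype.one_lt_card (α := E)
  have := card_traceZeroFactors_of_trace_ne_zero hE hb
  lia

theorem card_traceZeroFactors_units_eq [CharP F 2] [Fintype E] (hE : finrank E F = 3) (b : Fˣ) :
    (traceZeroFactors E (b : F)).card = Fintype.card E - 1 ∨
      (traceZeroFactors E (b : F)).card = 2 * (Fintype.card E - 1) ∨
      (traceZeroFactors E (b : F)).card = 0 :=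
  or_iff_not_imp_left.2 fun h => card_traceZeroFactors_of_trace_ne_zero hE fun hb =>
    h (card_traceZeroFactors_of_trace_eq_zero hE hb)

theorem mem_traceKernelSpan_iff {K : Type*} [Field K] [CharZero K] [CharP F 2]
    (hE : finrank E F = 3) {x : MonoidAlgebra K Fˣ} : x ∈ traceKernelSpan E F K ↔
      Function.FactorsThrough x.coeff fun b : Fˣ => (traceZeroFactors E (b : F)).card := by
  let := Fintype.ofInjective _ (algebraMap E F).injective
  have hcoeff (k₁ k₂ k₃ : K) (b : Fˣ) : (k₁ • groupAlgebraSum 1 + k₂ • traceKernelSum E F K +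
      k₃ • traceKernelSum E F K ^ 2).coeff b =
      k₁ + k₂ * (if (traceZeroFactors E (b : F)).card = Fintype.card E - 1 then 1 else 0) +
        k₃ * (traceZeroFactors E (b : F)).card := by
    simp_rw [← trace_eq_zero_iff_card_traceZeroFactors hE]
    rw [← coeff_traceKernelSum_mul_self, ← pow_two]
    simp [traceKernelSum]
  rw [traceKernelSpan, Submodule.mem_span_triple]
  constructor
  · rintro ⟨k₁, k₂, k₃, rfl⟩ b b' hb
    simp only [hcoeff, hb]
  · intro hx
    obtain ⟨e, he⟩ := (Function.factorsThrough_iff _).1 hx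
    set n := Fintype.card E - 1
    have hn0 : n ≠ 0 := Nat.sub_ne_zero_of_lt Fintype.one_lt_card
    -- The coefficients interpolate `e` at `0`, `n` and `2 * n`.
    refine ⟨e 0, e n - e 0 - (e (2 * n) - e 0) / 2, (e (2 * n) - e 0) / (2 * n), ?_⟩
    ext b
    rw [hcoeff, he, Function.comp_apply]
    obtain h | h | h := card_traceZeroFactors_units_eq hE b
    · rw [h, if_pos rfl]
      field_simp
      ring
    · rw [h, if_neg (by lia), Nat.cast_mul, Nat.cast_two]
      field_simp
      ring
    · rw [h, if_neg hn0.symm, Nat.cast_zero]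
      ring

end TraceZeroFactors

section FourierSum

variable {R K ι : Type*} [CommRing R] [Fintype R] [CommRing K]

/-- The Fourier transform, with respect to the additive character `ψ`, of a function `g` on a finite
commutative ring. -/
def fourierSum (ψ : AddChar R K) (g : R → K) (b : R) : K :=
  ∑ x, g x * ψ (b * x)

/-- The additive convolution of two functions on a finite commutative ring. -/
def additiveConvolution (g h : R → K) (d : R) : K :=
  ∑ z, g z * h (d - z)

theorem fourierSum_additiveConvolution (ψ : AddChar R K) (g h : R → K) :
    fourierSum ψ (additiveConvolution g h) = fourierSum ψ g * fourierSum ψ h := by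
  ext b
  simp_rw [Pi.mul_apply, fourierSum, additiveConvolution, Finset.sum_mul]
  rw [Finset.sum_comm]
  refine Finset.sum_congr rfl fun z _ => ?_
  rw [← Equiv.sum_comp (Equiv.addRight z), Finset.mul_sum]
  refine Finset.sum_congr rfl fun y _ => ?_
  rw [Equiv.coe_addRight, add_sub_cancel_right, mul_add, AddChar.map_add_eq_mul]
  ring

theorem fourierSum_inv_fourierSum [IsDomain K] {ψ : AddChar R K} (hψ : ψ.IsPrimitive)
    (g : R → K) : fourierSum ψ⁻¹ (fourierSum ψ g) = (Fintype.card R : K) • g := by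
  classical
  ext a
  have hmul (x b : R) : g x * ψ (b * x) * ψ⁻¹ (a * b) = g x * ψ (b * (x - a)) := by
    rw [AddChar.inv_apply, mul_assoc, ← AddChar.map_add_eq_mul, mul_sub, mul_comm a,
      sub_eq_add_neg]
  simp_rw [fourierSum, Finset.sum_mul, hmul]
  rw [Finset.sum_comm]
  simp_rw [← Finset.mul_sum, AddChar.sum_mulShift _ hψ, sub_eq_zero]
  simp [mul_comm]

variable {ψ : AddChar R K} {c : R → ι}

theorem factorsThrough_additiveConvolution [IsDomain K] [CharZero K] (hψ : ψ.IsPrimitive)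
    (hc : ∀ g : R → K, g.FactorsThrough c → (fourierSum ψ g).FactorsThrough c)
    (hc' : ∀ g : R → K, g.FactorsThrough c → (fourierSum ψ⁻¹ g).FactorsThrough c)
    {g h : R → K} (hg : g.FactorsThrough c) (hh : h.FactorsThrough c) :
    (additiveConvolution g h).FactorsThrough c := by
  intro d d' hd
  have hmul : (fourierSum ψ g * fourierSum ψ h).FactorsThrough c := fun x y hxy => by
    rw [Pi.mul_apply, Pi.mul_apply, hc g hg hxy, hc h hh hxy]
  have hinv := hc' _ hmul hd
  rw [← fourierSum_additiveConvolution, fourierSum_inv_fourierSum hψ] at hinv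
  exact mul_left_cancel₀ (Nat.cast_ne_zero.2 Fintype.card_ne_zero) hinv

theorem factorsThrough_ncard_add_eq [IsDomain K] [CharZero K] (hψ : ψ.IsPrimitive)
    (hc : ∀ g : R → K, g.FactorsThrough c → (fourierSum ψ g).FactorsThrough c)
    (hc' : ∀ g : R → K, g.FactorsThrough c → (fourierSum ψ⁻¹ g).FactorsThrough c) (i j : ι) :
    Function.FactorsThrough (fun d => {z | c z = i ∧ c (d - z) = j}.ncard) c := by
  classical
  have hind (i : ι) : Function.FactorsThrough (fun z => if c z = i then (1 : K) else 0) c :=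
    fun x y hxy => by simp only [hxy]
  have hcard (d : R) : ({z | c z = i ∧ c (d - z) = j}.ncard : K) =
      additiveConvolution (fun z => if c z = i then 1 else 0)
        (fun z => if c z = j then 1 else 0) d := by
    simp [additiveConvolution, ← ite_and, Set.ncard_eq_toFinset_card', and_comm]
  intro d d' hd
  have h := factorsThrough_additiveConvolution hψ hc hc' (hind i) (hind j) hd
  rw [← hcard, ← hcard] at h
  exact Nat.cast_injective h

end FourierSum

section TraceZeroClass

open Module MonoidAlgebra

theorem two_mul_sub_one_lt_sq_sub_one {q : ℕ} (hq : 1 < q) : 2 * (q - 1) < q ^ 2 - 1 := by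
  obtain ⟨n, rfl⟩ := Nat.exists_eq_add_of_lt hq
  ring_nf
  lia

variable {E F H K : Type*} [Field F] [Fintype F] [DecidableEq F] [Field H] [Algebra F H] [Field K]

theorem fourierSum_traceAddChar_units [Fintype H] {ψ : AddChar F K}
    (hψ : ∑ a, ψ a = 0) (hH : Odd (finrank F H)) {g : H → K} {f : Fˣ → K}
    (hf : ∀ x : Hˣ, g x = f (Units.map (Algebra.norm F) x)) (b : Hˣ) :
    fourierSum (traceAddChar H ψ) g b = g 0 +
      (gaussElement ψ ^ finrank F H * groupAlgebraInv (groupAlgebraSum f)).coeff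
        (Units.map (Algebra.norm F) b) := by
  classical
  have hunits := sum_units_eq_sum_sub fun x : H => g x * traceAddChar H ψ (b * x)
  rw [mul_zero, AddChar.map_zero_eq_one, mul_one] at hunits
  rw [coeff_gaussElement_pow_finrank_mul hψ hH]
  simp_rw [← hf, hunits, add_sub_cancel]
  rfl

variable [Field E] [DecidableEq E] [Algebra E F] [CharP F 2]

theorem card_traceZeroFactors_eq_sq_sub_one_iff [Fintype E] (hE : finrank E F = 3) (b : F) :
    (traceZeroFactors E b).card = Fintype.card E ^ 2 - 1 ↔ b = 0 := by
  refine ⟨fun h => by_contra fun hb => ?_, ?_⟩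
  · have hq := Fintype.one_lt_card (α := E)
    have hcard := card_traceZeroFactors_units_eq hE (.mk0 b hb)
    rw [Units.val_mk0, h] at hcard
    have hlt := two_mul_sub_one_lt_sq_sub_one hq
    lia
  · rintro rfl
    rw [card_traceZeroFactors_zero, hE]

/-- The number of factorisations of the norm of `x` into two factors of trace zero, an invariant
whose fibres are the relations of the association scheme on `H`. -/
def traceZeroClass (E F : Type*) {H : Type*} [Field E] [DecidableEq E] [Field F] [Fintype F]
    [DecidableEq F] [Algebra E F] [Field H] [Algebra F H] (x : H) : ℕ :=
  (traceZeroFactors E (Algebra.norm F x)).card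

theorem traceZeroClass_eq_sq_sub_one_iff [Fintype E] [FiniteDimensional F H]
    (hE : finrank E F = 3) (x : H) :
    traceZeroClass E F x = Fintype.card E ^ 2 - 1 ↔ x = 0 := by
  rw [traceZeroClass, card_traceZeroFactors_eq_sq_sub_one_iff hE, Algebra.norm_eq_zero_iff]

theorem factorsThrough_fourierSum_traceAddChar [Fintype H] [CharZero K] (hE : finrank E F = 3)
    (hH : finrank F H = 3) {ψ : AddChar E K} (hψ : ψ ≠ 1) {g : H → K}
    (hg : g.FactorsThrough (traceZeroClass E F)) :
    (fourierSum (traceAddChar H (traceAddChar F ψ)) g).FactorsThrough (traceZeroClass E F) := by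
  classical
  let := Fintype.ofInjective _ (algebraMap E F).injective
  obtain ⟨e, rfl⟩ := (Function.factorsThrough_iff _).1 hg
  set f : Fˣ → K := fun u => e (traceZeroFactors E (u : F)).card
  have hsum : ∑ a, traceAddChar F ψ a = 0 :=
    AddChar.sum_eq_zero_of_ne_one (traceAddChar_ne_one hψ)
  have hunits := fourierSum_traceAddChar_units hsum (by rw [hH]; decide : Odd (finrank F H))
    (g := e ∘ traceZeroClass E F) (f := f) fun _ => rfl
  have hspan : groupAlgebraSum f ∈ traceKernelSpan E F K :=
    (mem_traceKernelSpan_iff hE).2 fun u u' h => congrArg e h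
  have hfactors := (mem_traceKernelSpan_iff hE).1 <|
    gaussElement_pow_three_mul_groupAlgebraInv_mem_traceKernelSpan hE hψ hspan
  have hfactor (b b' : Hˣ) (h : traceZeroClass E F (b : H) = traceZeroClass E F (b' : H)) :
      fourierSum (traceAddChar H (traceAddChar F ψ)) (e ∘ traceZeroClass E F) b =
        fourierSum (traceAddChar H (traceAddChar F ψ)) (e ∘ traceZeroClass E F) b' := by
    rw [hunits, hunits, hH]
    exact congrArg _ (hfactors h)
  intro b b' hb
  by_cases hb0 : b = 0
  · have hb0' : b' = 0 := by
      rwa [← traceZeroClass_eq_sq_sub_one_iff hE, ← hb, traceZeroClass_eq_sq_sub_one_iff hE]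
    rw [hb0, hb0']
  · have hb0' : b' ≠ 0 := by
      rwa [Ne, ← traceZeroClass_eq_sq_sub_one_iff hE, ← hb, traceZeroClass_eq_sq_sub_one_iff hE]
    exact hfactor (.mk0 b hb0) (.mk0 b' hb0') hb

theorem factorsThrough_ncard_traceZeroClass (hE : finrank E F = 3) (hH : finrank F H = 3)
    (i j : ℕ) :
    Function.FactorsThrough
      (fun d : H => {z : H | traceZeroClass E F z = i ∧ traceZeroClass E F (d - z) = j}.ncard)
      (traceZeroClass E F) := by
  have : Finite E := .of_injective _ (algebraMap E F).injective
  have : FiniteDimensional F H := .of_finrank_pos (hH ▸ three_pos)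
  have : Finite H := Module.finite_of_finite F
  let := Fintype.ofFinite H
  obtain ⟨ψ, hψ⟩ := AddChar.exists_apply_ne_zero.2 (one_ne_zero (α := E))
  replace hψ : ψ ≠ 1 := AddChar.ne_one_iff.2 ⟨1, hψ⟩
  have hprim := isPrimitive_traceAddChar (F := H) (traceAddChar_ne_one (F := F) hψ)
  refine factorsThrough_ncard_add_eq hprim
    (fun g => factorsThrough_fourierSum_traceAddChar hE hH hψ) (fun g => ?_) i j
  rw [traceAddChar_inv, traceAddChar_inv]
  exact factorsThrough_fourierSum_traceAddChar hE hH (inv_ne_one.2 hψ)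

theorem exists_ncard_traceZeroClass_add_eq (hE : finrank E F = 3) (hH : finrank F H = 3) :
    ∃ p : ℕ → ℕ → ℕ → ℕ, ∀ i j (d : H),
      {z | traceZeroClass E F z = i ∧ traceZeroClass E F (d + z) = j}.ncard =
        p i j (traceZeroClass E F d) := by
  have : CharP H 2 := charP_of_injective_algebraMap (algebraMap F H).injective 2
  choose p hp using fun i j =>
    (Function.factorsThrough_iff _).1 (factorsThrough_ncard_traceZeroClass hE hH i j)
  simp only [CharTwo.sub_eq_add] at hp
  exact ⟨p, fun i j => congrFun (hp i j)⟩

end TraceZeroClass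

section Relations

open Module

theorem norm_eq_pow_of_finrank_eq_three {E F : Type*} [Field E] [Fintype E] [Field F] [Finite F]
    [Algebra E F] (hE : finrank E F = 3) (x : F) :
    algebraMap E F (Algebra.norm E x) = x ^ (Fintype.card E ^ 2 + Fintype.card E + 1) := by
  rw [FiniteField.algebraMap_norm_eq_prod_pow, hE, Nat.card_eq_fintype_card]
  simp only [Finset.prod_range_succ, Finset.prod_range_zero]
  ring

theorem trFE_eq_algebraMap_trace {E F : Type*} [Field E] [Fintype E] [Field F] [Finite F]
    [Algebra E F] {s : ℕ} (hq : Fintype.card E = 2 ^ s) (hE : finrank E F = 3) (x : F) :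
    trFE s x = algebraMap E F (Algebra.trace E F x) := by
  rw [FiniteField.algebraMap_trace_eq_sum_pow, hE, Nat.card_eq_fintype_card, hq, trFE]
  simp only [Finset.sum_range_succ, Finset.sum_range_zero]
  ring

theorem trace_pow_card_add_one {E F : Type*} [Field E] [Fintype E] [Field F] [Finite F]
    [Algebra E F] (hE : finrank E F = 3) {u : F} (hu : u ≠ 0) :
    Algebra.trace E F (u ^ (Fintype.card E + 1)) =
      Algebra.norm E u * Algebra.trace E F u⁻¹ := by
  have hfrob : (u ^ (Fintype.card E + 1)) ^ Fintype.card E = Algebra.norm E u • u⁻¹ := by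
    rw [Algebra.smul_def, norm_eq_pow_of_finrank_eq_three hE, eq_mul_inv_iff_mul_eq₀ hu]
    ring
  rw [← smul_eq_mul, ← map_smul, ← hfrob]
  exact (Algebra.trace_eq_of_algEquiv (FiniteField.frobeniusAlgEquivOfAlgebraic E F) _).symm

variable {E F H : Type*} [Field E] [Fintype E] [DecidableEq E] [Field F] [Fintype F]
  [DecidableEq F] [Algebra E F] {s : ℕ}

theorem ncard_Sa (hq : Fintype.card E = 2 ^ s) (hE : finrank E F = 3) (ω : F) (a : ℤ) :
    (Sa s ω a).ncard = (traceZeroFactors E (ω ^ a)).card := by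
  have hmem (u : Fˣ) : (u : F) ∈ Sa s ω a ↔ u⁻¹ ∈ traceZeroFactors E (ω ^ a) := by
    simp [Sa, mem_traceZeroFactors, trFE_eq_algebraMap_trace hq hE, ← hq,
      trace_pow_card_add_one hE]
  have himage : Sa s ω a = (Units.val ∘ Inv.inv) '' (traceZeroFactors E (ω ^ a) : Set Fˣ) := by
    ext u
    refine ⟨fun hu => ⟨(.mk0 u hu.1)⁻¹, (hmem (.mk0 u hu.1)).1 hu, by simp⟩, ?_⟩
    rintro ⟨v, hv, rfl⟩
    exact (hmem v⁻¹).2 (by rwa [inv_inv])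
  rw [himage, Set.ncard_image_of_injective _ (Units.val_injective.comp inv_injective),
    Set.ncard_coe_finset]

theorem traceZeroFactors_zpow_add_mul (hq : Fintype.card E = 2 ^ s) (hE : finrank E F = 3) {ω : F}
    (hω : ω ≠ 0) (a t : ℤ) :
    traceZeroFactors E (ω ^ (a + Mof s * t)) = traceZeroFactors E (ω ^ a) := by
  have hnorm : ω ^ Mof s = algebraMap E F (Algebra.norm E ω) := by
    rw [norm_eq_pow_of_finrank_eq_three hE, hq, Mof, ← pow_mul, mul_comm s]
  have hsmul : ω ^ (a + Mof s * t) = Algebra.norm E ω ^ t • ω ^ a := by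
    rw [zpow_add₀ hω, zpow_mul, zpow_natCast, hnorm, Algebra.smul_def, map_zpow₀, mul_comm]
  rw [hsmul, traceZeroFactors_smul (zpow_ne_zero t (Algebra.norm_ne_zero_iff.2 hω))]

variable [Field H] [Algebra F H] [FiniteDimensional F H]

theorem mem_Rclass_iff (hq : Fintype.card E = 2 ^ s) (hE : finrank E F = 3) {β : H}
    (hβ : ∀ x : H, x ≠ 0 → ∃ n : ℕ, x = β ^ n) (hβ0 : β ≠ 0) (n : ℕ) (x : H) :
    x ∈ Rclass s β {i | (Sa s (Algebra.norm F β) i.val).ncard = n} ↔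
      x ≠ 0 ∧ traceZeroClass E F x = n := by
  have hclass (a t : ℤ) : traceZeroClass E F (β ^ (a + Mof s * t)) =
      (Sa s (Algebra.norm F β) a).ncard := by
    rw [traceZeroClass, ncard_Sa hq hE, map_zpow' _ (fun x => Algebra.norm_inv x),
      traceZeroFactors_zpow_add_mul hq hE (Algebra.norm_ne_zero_iff.2 hβ0)]
  simp only [Rclass, cyc, Set.mem_iUnion, Set.mem_ofPred_eq, exists_prop]
  constructor
  · rintro ⟨i, hi, t, rfl⟩
    exact ⟨zpow_ne_zero _ hβ0, (hclass _ t).trans hi⟩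
  · rintro ⟨hx0, hx⟩
    obtain ⟨N, rfl⟩ := hβ x hx0
    have hN : β ^ N = β ^ (((N : ZMod (Mof s)).val : ℤ) + (Mof s : ℤ) * (N / Mof s : ℕ)) := by
      rw [ZMod.val_natCast, ← zpow_natCast]
      congr 1
      exact_mod_cast (Nat.mod_add_div N (Mof s)).symm
    exact ⟨N, by rw [← hx, hN, hclass], _, hN⟩

/-- The value taken by `traceZeroClass` on the relation `R''_k`, where `q` is the order of the
smallest field. -/
def relationValue (q : ℕ) : Fin 4 → ℕ :=
  ![q ^ 2 - 1, q - 1, 2 * (q - 1), 0]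

theorem relationValue_injective {q : ℕ} (hq : 1 < q) : Function.Injective (relationValue q) := by
  have hlt : 2 * (q - 1) < q ^ 2 - 1 := two_mul_sub_one_lt_sq_sub_one hq
  intro k l h
  fin_cases k <;> fin_cases l <;> simp [relationValue] at h ⊢ <;> lia

variable [CharP F 2]

theorem exists_traceZeroClass_eq_relationValue (hE : finrank E F = 3) (x : H) :
    ∃ k, traceZeroClass E F x = relationValue (Fintype.card E) k := by
  obtain rfl | hx := eq_or_ne x 0
  · exact ⟨0, (traceZeroClass_eq_sq_sub_one_iff hE 0).2 rfl⟩
  · have hnorm : Algebra.norm F x ≠ 0 := Algebra.norm_ne_zero_iff.2 hx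
    obtain h | h | h := card_traceZeroFactors_units_eq hE (.mk0 _ hnorm)
    exacts [⟨1, h⟩, ⟨2, h⟩, ⟨3, h⟩]

theorem mem_Rfam_iff (hq : Fintype.card E = 2 ^ s) (hE : finrank E F = 3) {β : H}
    (hβ : ∀ x : H, x ≠ 0 → ∃ n : ℕ, x = β ^ n) (hβ0 : β ≠ 0) (k : Fin 4) (x : H) :
    x ∈ Rfam s (Algebra.norm F β) β k ↔
      traceZeroClass E F x = relationValue (Fintype.card E) k := by
  have hzero : traceZeroClass E F x = relationValue (Fintype.card E) 0 ↔ x = 0 :=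
    traceZeroClass_eq_sq_sub_one_iff hE x
  have hclass (k : Fin 4) (hk : k ≠ 0) :
      x ∈ Rclass s β {i | (Sa s (Algebra.norm F β) i.val).ncard =
        relationValue (Fintype.card E) k} ↔
      traceZeroClass E F x = relationValue (Fintype.card E) k := by
    rw [mem_Rclass_iff hq hE hβ hβ0, and_iff_right_of_imp]
    rintro h rfl
    exact hk (relationValue_injective Fintype.one_lt_card (h.symm.trans (hzero.2 rfl)))
  rw [hq] at hclass ⊢
  match k with
  | 0 => exact (hq ▸ hzero).symm
  | 1 => exact hclass 1 (by decide)
  | 2 => exact hclass 2 (by decide)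
  | 3 => exact hclass 3 (by decide)

end Relations

section FieldTower

open Module

theorem finrank_eq_of_card_eq_pow {E F : Type*} [Field E] [Fintype E] [Field F] [Fintype F]
    [Algebra E F] {n : ℕ} (h : Fintype.card F = Fintype.card E ^ n) : finrank E F = n :=
  Nat.pow_right_injective Fintype.one_lt_card (card_eq_pow_finrank.symm.trans h)

theorem exists_subfield_natCard_eq_pow {F : Type*} [Field F] [Finite F] {p m n : ℕ}
    [Fact p.Prime] (hF : Nat.card F = p ^ n) (hm : m ≠ 0) (hmn : m ∣ n) :
    ∃ E : Subfield F, Nat.card E = p ^ m := by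
  have := Fintype.ofFinite F
  have : CharP F p := charP_of_card_eq_prime_pow (Nat.card_eq_fintype_card.symm.trans hF)
  let := ZMod.algebra F p
  have hn : finrank (ZMod p) F = n := finrank_eq_of_card_eq_pow (by
    rw [ZMod.card, ← hF, Nat.card_eq_fintype_card])
  obtain ⟨g⟩ := FiniteField.nonempty_algHom_of_finrank_dvd (F := ZMod p) (K := GaloisField p m)
    (L := F) (by rwa [GaloisField.finrank p hm, hn])
  refine ⟨g.toRingHom.fieldRange, ?_⟩
  rw [← GaloisField.card p m hm]
  exact Nat.card_range_of_injective g.toRingHom.injective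

theorem norm_eq_of_algebraMap_eq {F H : Type*} [Field F] [Fintype F] [Field H] [Finite H]
    [Algebra F H] {s : ℕ} (hF : Fintype.card F = 2 ^ (3 * s)) (hH : finrank F H = 3) {β : H} {ω : F}
    (hω : algebraMap F H ω = β ^ (1 + 2 ^ (3 * s) + 2 ^ (6 * s))) : Algebra.norm F β = ω := by
  apply (algebraMap F H).injective
  rw [norm_eq_pow_of_finrank_eq_three hH, hω, hF, ← pow_mul, mul_right_comm]
  ring

theorem ne_zero_of_forall_exists_eq_pow {H : Type*} [Field H] [Fintype H]
    (hH : 2 < Fintype.card H) {β : H} (hβ : ∀ x : H, x ≠ 0 → ∃ n : ℕ, x = β ^ n) : β ≠ 0 := by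
  classical
  rintro rfl
  have : Nontrivial Hˣ := Fintype.one_lt_card_iff_nontrivial.1 <| by
    rw [Fintype.card_units]
    lia
  obtain ⟨u, hu⟩ := exists_ne (1 : Hˣ)
  obtain ⟨n, hn⟩ := hβ u u.ne_zero
  have hn0 : n = 0 := by_contra fun h => u.ne_zero (hn.trans (zero_pow h))
  exact hu (Units.ext (by rw [hn, hn0, pow_zero, Units.val_one]))

end FieldTower

theorem statement18 (s : ℕ) (hs : 1 ≤ s) (F H : Type*) [Field F] [Fintype F] [Field H] [Fintype H]
    (hF : Fintype.card F = 2 ^ (3 * s)) (hH : Fintype.card H = 2 ^ (9 * s))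
    (f : F →+* H) (β : H) (hβ : ∀ x : H, x ≠ 0 → ∃ n : ℕ, x = β ^ n)
    (ω : F) (hω : f ω = β ^ (1 + 2 ^ (3 * s) + 2 ^ (6 * s)))
    (hωgen : ∀ x : F, x ≠ 0 → ∃ n : ℕ, x = ω ^ n) :
    (∀ x : H, ∃! k : Fin 4, x ∈ Rfam s ω β k) ∧
    ∃ p : Fin 4 → Fin 4 → Fin 4 → ℕ,
      ∀ k l m : Fin 4, ∀ d ∈ Rfam s ω β m,
        {z : H | z ∈ Rfam s ω β k ∧ d + z ∈ Rfam s ω β l}.ncard = p k l m := by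
  classical
  let := f.toAlgebra
  have : CharP F 2 := charP_of_card_eq_prime_pow hF
  obtain ⟨E, hq⟩ := exists_subfield_natCard_eq_pow (Nat.card_eq_fintype_card.trans hF)
    (Nat.one_le_iff_ne_zero.1 hs) (dvd_mul_left s 3)
  rw [Nat.card_eq_fintype_card] at hq
  have hE : Module.finrank E F = 3 := finrank_eq_of_card_eq_pow (by rw [hF, hq, pow_mul'])
  have hFH : Module.finrank F H = 3 := finrank_eq_of_card_eq_pow (by rw [hH, hF]; ring)
  have hβ0 : β ≠ 0 := ne_zero_of_forall_exists_eq_pow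
    (hH ▸ Nat.pow_lt_pow_right one_lt_two (by lia : 1 < 9 * s)) hβ
  obtain rfl : Algebra.norm F β = ω := norm_eq_of_algebraMap_eq hF hFH hω
  simp only [mem_Rfam_iff hq hE hβ hβ0]
  constructor
  · intro x
    obtain ⟨k, hk⟩ := exists_traceZeroClass_eq_relationValue hE x
    exact ⟨k, hk, fun l hl => relationValue_injective Fintype.one_lt_card (hl.symm.trans hk)⟩
  · obtain ⟨p, hp⟩ := exists_ncard_traceZeroClass_add_eq hE hFH
    set v := relationValue (Fintype.card E)
    exact ⟨fun k l m => p (v k) (v l) (v m), fun k l m d hd =>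
      (hp (v k) (v l) d).trans (congrArg _ hd)⟩
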